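/- Suppose Assumption A1 holds, the influence network is a star topology with center node 1 (C_{j1} = 1 and C_{ji} = 0 for all j ≠ 1 and all i ≠ 1), and the center node is fully stubborn (a_1 = 0). Then every trajectory of the perception dynamics with reflected appraisals (system (11)) starting from p(0) ∈ [0,1]^n converges to the unique equilibrium p* given by: p*_i = 1/n for every fully stubborn i ≠ 1; p*_i = (1 − √(1 − 4a_i(1 − a_i)/n))/(2a_i) for every i ∈ V_p; and p*_1 = 1/n + (1/n)∑_{j ∈ V_p} a_j(1 − p*_j)/(1 − a_j p*_j). Moreover, for each non-center node i ≠ 1 the sequence p_i(s) converges to p*_i exponentially fast (there exist c > 0 and λ ∈ (0,1) with |p_i(s) − p*_i| ≤ c λ^s for all s). -/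

import Mathlib

/-!
Since the center is fully stubborn, the mass it receives never feeds back: each non-center
coordinate evolves autonomously under the scalar quadratic map `x ↦ a x² + (1 - a) / n`
(`percMap_noncenter`). On `[0, 1]` this map contracts towards its smaller fixed point `q`, because
`|a x² - a q²| = a (x + q) |x - q| ≤ a (1 + q) |x - q|`, and `a (1 + q) < 1`: the two fixed points
sum to `1 / a` and the larger one exceeds `1` (`fixedPoint_props`). Hence the convergence is
geometric (`quadratic_geometric`). The center coordinate is a continuous function of the
non-center coordinates one step earlier (`percMap_center`), so it converges as well; its limit takes
the stated form through the identity `q (1 - a q) = (1 - a) / n`.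
-/

open Matrix Finset

/-- `W(x) = diag(x) + (I - diag(x)) C`. -/
noncomputable def Wmat (n : ℕ) (C : Matrix (Fin n) (Fin n) ℝ) (x : Fin n → ℝ) :
    Matrix (Fin n) (Fin n) ℝ :=
  Matrix.diagonal x + (1 - Matrix.diagonal x) * C

/-- The map of system (11): `p ↦ (I - A) W(p)ᵀ A (I - A)⁻¹ p + (I - A) 𝟙 / n`. -/
noncomputable def percMap (n : ℕ) (C : Matrix (Fin n) (Fin n) ℝ) (a : Fin n → ℝ)
    (p : Fin n → ℝ) : Fin n → ℝ :=
  ((1 - Matrix.diagonal a) * (Wmat n C p)ᵀ * Matrix.diagonal a *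
      (1 - Matrix.diagonal a)⁻¹) *ᵥ p
    + (1 / (n : ℝ)) • ((1 - Matrix.diagonal a) *ᵥ (fun _ => (1 : ℝ)))

/-- The `n`-simplex `Δ_n`. -/
def simplex (n : ℕ) : Set (Fin n → ℝ) := {x | (∀ i, 0 ≤ x i) ∧ ∑ i, x i = 1}

/-- The box `Γ_n(y, z) = {x : y ≤ x ≤ z}`. -/
def box (n : ℕ) (y z : Fin n → ℝ) : Set (Fin n → ℝ) := {x | ∀ i, y i ≤ x i ∧ x i ≤ z i}

/-- Componentwise form of the map for an arbitrary network, with the contribution of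
`diag(x)` separated from that of `C`. -/
lemma percMap_apply (n : ℕ) (C : Matrix (Fin n) (Fin n) ℝ) (a : Fin n → ℝ)
    (ha1 : ∀ i, a i < 1) (x : Fin n → ℝ) (i : Fin n) :
    percMap n C a x i =
      (1 - a i) * ∑ j, (if j = i then x j else 0) * (a j / (1 - a j)) * x j
      + (1 - a i) * ∑ j, (1 - x j) * C j i * (a j / (1 - a j)) * x j + (1 - a i) / n := by
  have hne : ∀ i, 1 - a i ≠ 0 := fun i => (sub_pos.2 (ha1 i)).ne'
  have h1 : (1 - Matrix.diagonal a : Matrix (Fin n) (Fin n) ℝ)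
      = Matrix.diagonal (fun i => 1 - a i) := by
    rw [← Matrix.diagonal_one, Matrix.diagonal_sub]
  have h1x : (1 - Matrix.diagonal x : Matrix (Fin n) (Fin n) ℝ)
      = Matrix.diagonal (fun i => 1 - x i) := by
    rw [← Matrix.diagonal_one, Matrix.diagonal_sub]
  have h2 : (Matrix.diagonal (fun i => 1 - a i) : Matrix (Fin n) (Fin n) ℝ)⁻¹
      = Matrix.diagonal (fun i => (1 - a i)⁻¹) := by
    apply Matrix.inv_eq_right_inv
    rw [Matrix.diagonal_mul_diagonal, ← Matrix.diagonal_one]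
    congr 1
    funext i
    exact mul_inv_cancel₀ (hne i)
  unfold percMap Wmat
  rw [h1, h1x, h2]
  rw [Pi.add_apply, Pi.smul_apply, Matrix.mulVec_diagonal, smul_eq_mul]
  simp only [Matrix.mulVec, dotProduct, Matrix.mul_diagonal, Matrix.diagonal_mul,
    Matrix.transpose_apply, Matrix.add_apply, Matrix.diagonal_apply]
  have h3 : 1 / (n : ℝ) * ((1 - a i) * 1) = (1 - a i) / n := by ring
  rw [h3, Finset.mul_sum, Finset.mul_sum, ← Finset.sum_add_distrib]
  refine congrArg (· + (1 - a i) / (n : ℝ)) (Finset.sum_congr rfl fun j _ => ?_)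
  ring

lemma percMap_noncenter (n : ℕ) [NeZero n] (C : Matrix (Fin n) (Fin n) ℝ) (a : Fin n → ℝ)
    (ha1 : ∀ i, a i < 1)
    (hstar2 : ∀ j : Fin n, j ≠ 0 → ∀ i : Fin n, i ≠ 0 → C j i = 0)
    (hcenter : a 0 = 0) (x : Fin n → ℝ) (i : Fin n) (hi : i ≠ 0) :
    percMap n C a x i = a i * x i ^ 2 + (1 - a i) / n := by
  have hne : 1 - a i ≠ 0 := (sub_pos.2 (ha1 i)).ne'
  have hz : ∑ j, (1 - x j) * C j i * (a j / (1 - a j)) * x j = 0 := by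
    refine Finset.sum_eq_zero fun j _ => ?_
    by_cases hj : j = 0
    · simp [hj, hcenter]
    · simp [hstar2 j hj i hi]
  rw [percMap_apply n C a ha1, hz]
  simp only [ite_mul, zero_mul, Finset.sum_ite_eq', Finset.mem_univ, if_true]
  field_simp
  ring

lemma percMap_center (n : ℕ) [NeZero n] (C : Matrix (Fin n) (Fin n) ℝ) (a : Fin n → ℝ)
    (ha1 : ∀ i, a i < 1) (hstar1 : ∀ j : Fin n, j ≠ 0 → C j 0 = 1)
    (hcenter : a 0 = 0) (x : Fin n → ℝ) :
    percMap n C a x 0 = 1 / n +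
      ∑ j ∈ Finset.univ.filter (fun j => j ≠ 0), (1 - x j) * (a j / (1 - a j)) * x j := by
  rw [percMap_apply n C a ha1, Finset.sum_filter]
  have h1 : ∀ j, (1 - x j) * C j 0 * (a j / (1 - a j)) * x j
      = if j ≠ 0 then (1 - x j) * (a j / (1 - a j)) * x j else 0 := by
    intro j
    by_cases hj : j = 0
    · simp [hj, hcenter]
    · simp [hj, hstar1 j hj]
  simp only [h1]
  simp [hcenter]
  ring

/-- The smaller fixed point `q` of `x ↦ a x² + (1 - a) / n` lies in `[0, 1]`, and the Lipschitz
bound `a (1 + q)` of the map towards `q` on `[0, 1]` is less than `1`. -/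
lemma fixedPoint_props (n : ℕ) (hn : 2 ≤ n) (a q : ℝ) (ha : 0 < a) (ha1 : a < 1)
    (hq : q = (1 - Real.sqrt (1 - 4 * a * (1 - a) / n)) / (2 * a)) :
    q = a * q ^ 2 + (1 - a) / n ∧ 0 ≤ q ∧ q ≤ 1 ∧ a * (1 + q) < 1 := by
  have hn' : (2 : ℝ) ≤ n := by exact_mod_cast hn
  have hpos : 0 < a * (1 - a) := mul_pos ha (sub_pos.2 ha1)
  set t := 4 * a * (1 - a) / n with ht
  have ht0 : 0 < t := by
    have : 0 < 4 * a * (1 - a) := by linarith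
    positivity
  have ht1 : t < 4 * (a * (1 - a)) := by
    rw [ht, div_lt_iff₀ (by linarith)]
    nlinarith
  have hd : (2 * a - 1) ^ 2 < 1 - t := by nlinarith
  have hS : 0 ≤ 1 - t := le_trans (sq_nonneg _) hd.le
  set r := Real.sqrt (1 - t) with hr
  have hr2 : r ^ 2 = 1 - t := Real.sq_sqrt hS
  have hr0 : 0 ≤ r := Real.sqrt_nonneg _
  have habs : |2 * a - 1| < r := by
    rw [hr]
    exact Real.lt_sqrt_of_sq_lt (by rwa [sq_abs])
  obtain ⟨hl, hu⟩ := abs_lt.1 habs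
  have hr1 : r < 1 := by nlinarith
  have h2 : 2 * a * q = 1 - r := by
    rw [hq]
    field_simp
  have hta : t = 4 * a * ((1 - a) / n) := by rw [ht]; ring
  refine ⟨?_, ?_, ?_, ?_⟩
  · have h4 : 4 * a * q = 4 * a * (a * q ^ 2 + (1 - a) / n) := by
      have : r = 1 - 2 * a * q := by linarith
      rw [this] at hr2
      linear_combination (-1 : ℝ) * hta - hr2
    exact mul_left_cancel₀ (by positivity) h4
  · by_contra! h
    nlinarith
  · by_contra! h
    nlinarith
  · nlinarith

/-- Trajectories of the quadratic map approach `q` geometrically with ratio `a (1 + q)`. In the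
degenerate case `a = 0` this ratio vanishes, so the rate is taken to be at least `1 / 2` to keep it positive. -/
lemma quadratic_geometric (a b q : ℝ) (ha : 0 ≤ a) (hb : 0 ≤ b) (hab : a + b ≤ 1)
    (hq : q = a * q ^ 2 + b) (hq0 : 0 ≤ q) (hq1 : q ≤ 1) (hc : a * (1 + q) < 1)
    (x : ℕ → ℝ) (hx : ∀ s, x (s + 1) = a * x s ^ 2 + b) (hx0 : 0 ≤ x 0 ∧ x 0 ≤ 1) :
    ∃ c > 0, ∃ lam ∈ Set.Ioo (0 : ℝ) 1, ∀ s : ℕ, |x s - q| ≤ c * lam ^ s := by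
  have hbd : ∀ s, 0 ≤ x s ∧ x s ≤ 1 := by
    intro s
    induction s with
    | zero => exact hx0
    | succ s ih =>
      have h1 : x s ^ 2 ≤ 1 := pow_le_one₀ ih.1 ih.2
      rw [hx]
      constructor
      · positivity
      · nlinarith
  refine ⟨1, one_pos, max (a * (1 + q)) (1 / 2), ⟨?_, ?_⟩, ?_⟩
  · exact lt_max_of_lt_right (by norm_num)
  · exact max_lt hc (by norm_num)
  intro s
  rw [one_mul]
  induction s with
  | zero =>
    rw [pow_zero, abs_le]
    constructor <;> linarith [hx0.1, hx0.2]
  | succ s ih =>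
    have hfac : x (s + 1) - q = a * (x s + q) * (x s - q) := by
      rw [hx]
      linear_combination -hq
    have hnn : 0 ≤ a * (x s + q) := mul_nonneg ha (add_nonneg (hbd s).1 hq0)
    have hle : a * (x s + q) ≤ max (a * (1 + q)) (1 / 2) :=
      le_max_of_le_left (mul_le_mul_of_nonneg_left (by linarith [(hbd s).2]) ha)
    rw [hfac, abs_mul, abs_of_nonneg hnn, pow_succ']
    exact mul_le_mul hle ih (abs_nonneg _) (hnn.trans hle)

/-- Theorem 3(ii): star topology with fully stubborn center node `0`;
every trajectory of system (11) starting in `[0,1]^n` converges to the equilibrium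
`p*`, and non-center coordinates converge exponentially fast. -/
theorem star_fully_stubborn_center_convergence
    (n : ℕ) [NeZero n] (hn : 2 ≤ n)
    (C : Matrix (Fin n) (Fin n) ℝ)
    (hC0 : ∀ i j, 0 ≤ C i j) (hCrow : ∀ i, ∑ j, C i j = 1) (hCdiag : ∀ i, C i i = 0)
    (a : Fin n → ℝ) (ha0 : ∀ i, 0 ≤ a i) (ha1 : ∀ i, a i < 1) (hane : a ≠ 0)
    (hstar1 : ∀ j : Fin n, j ≠ 0 → C j 0 = 1)
    (hstar2 : ∀ j : Fin n, j ≠ 0 → ∀ i : Fin n, i ≠ 0 → C j i = 0)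
    (hcenter : a 0 = 0)
    (pstar : Fin n → ℝ)
    (hpf : ∀ i : Fin n, i ≠ 0 → a i = 0 → pstar i = 1 / (n : ℝ))
    (hpp : ∀ i : Fin n, 0 < a i →
      pstar i = (1 - Real.sqrt (1 - 4 * a i * (1 - a i) / n)) / (2 * a i))
    (hp1 : pstar 0 = 1 / (n : ℝ) + (1 / (n : ℝ)) *
      ∑ j ∈ Finset.univ.filter (fun j => 0 < a j),
        a j * (1 - pstar j) / (1 - a j * pstar j))
    (p : ℕ → Fin n → ℝ) (hp : ∀ s, p (s + 1) = percMap n C a (p s))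
    (hp0 : ∀ i, 0 ≤ p 0 i ∧ p 0 i ≤ 1) :
    Filter.Tendsto p Filter.atTop (nhds pstar) ∧
    ∀ i : Fin n, i ≠ 0 → ∃ c > 0, ∃ lam ∈ Set.Ioo (0 : ℝ) 1, ∀ s : ℕ,
      |p s i - pstar i| ≤ c * lam ^ s := by
  have hn' : (2 : ℝ) ≤ n := by exact_mod_cast hn
  have key : ∀ i : Fin n, i ≠ 0 → pstar i = a i * pstar i ^ 2 + (1 - a i) / n ∧
      0 ≤ pstar i ∧ pstar i ≤ 1 ∧ a i * (1 + pstar i) < 1 := by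
    intro i hi
    rcases (ha0 i).eq_or_lt with h | h
    · have hz := hpf i hi h.symm
      rw [← h, hz]
      refine ⟨by ring, by positivity, ?_, by norm_num⟩
      rw [div_le_one (by linarith)]
      linarith
    · exact fixedPoint_props n hn _ _ h (ha1 i) (hpp i h)
  have geo : ∀ i : Fin n, i ≠ 0 → ∃ c > 0, ∃ lam ∈ Set.Ioo (0 : ℝ) 1, ∀ s : ℕ,
      |p s i - pstar i| ≤ c * lam ^ s := by
    intro i hi
    obtain ⟨h1, h2, h3, h4⟩ := key i hi
    have hb : 0 ≤ 1 - a i := (sub_pos.2 (ha1 i)).le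
    have hb1 : (1 - a i) / n ≤ 1 - a i := div_le_self hb (by linarith)
    exact quadratic_geometric (a i) ((1 - a i) / n) (pstar i) (ha0 i) (by positivity)
      (by linarith) h1 h2 h3 h4 (fun s => p s i)
      (fun s => by
        rw [hp, percMap_noncenter n C a ha1 hstar2 hcenter _ i hi])
      (hp0 i)
  have lim : ∀ i : Fin n, i ≠ 0 →
      Filter.Tendsto (fun s => p s i) Filter.atTop (nhds (pstar i)) := by
    intro i hi
    obtain ⟨c, -, lam, hlam, h⟩ := geo i hi
    rw [tendsto_iff_dist_tendsto_zero]
    refine squeeze_zero (fun _ => dist_nonneg) (fun s => (Real.dist_eq _ _).trans_le (h s)) ?_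
    simpa using (tendsto_pow_atTop_nhds_zero_of_lt_one hlam.1.le hlam.2).const_mul c
  refine ⟨tendsto_pi_nhds.2 fun i => ?_, geo⟩
  by_cases hi : i = 0
  · subst hi
    have hlim : pstar 0 = 1 / n + ∑ j ∈ Finset.univ.filter (fun j => j ≠ 0),
        (1 - pstar j) * (a j / (1 - a j)) * pstar j := by
      rw [hp1, Finset.mul_sum, Finset.sum_filter, Finset.sum_filter]
      congr 1
      refine Finset.sum_congr rfl fun j _ => ?_
      by_cases hj : j = 0
      · simp [hj, hcenter]
      rcases (ha0 j).eq_or_lt with h | h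
      · simp [← h]
      rw [if_pos h, if_pos hj]
      obtain ⟨h1, h2, h3, h4⟩ := key j hj
      have hA : 1 - a j ≠ 0 := (sub_pos.2 (ha1 j)).ne'
      have hB : 1 - a j * pstar j ≠ 0 := by
        have : 0 < 1 - a j * pstar j := by linarith
        exact this.ne'
      have hN : (n : ℝ) ≠ 0 := by linarith
      -- the fixed-point equation in the form `(1 - a) / n = q (1 - a q)`
      have h5 : 1 - a j = n * (pstar j * (1 - a j * pstar j)) := by
        field_simp at h1
        linear_combination -h1
      have h6 : 1 / (n : ℝ) / (1 - a j * pstar j) = pstar j / (1 - a j) := by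
        rw [div_div, div_eq_div_iff (mul_ne_zero hN hB) hA]
        linear_combination h5
      linear_combination a j * (1 - pstar j) * h6
    rw [← Filter.tendsto_add_atTop_iff_nat 1, hlim]
    simp only [hp, percMap_center n C a ha1 hstar1 hcenter]
    refine tendsto_const_nhds.add (tendsto_finsetSum _ fun j hj => ?_)
    have hl := lim j (Finset.mem_filter.1 hj).2
    exact ((tendsto_const_nhds.sub hl).mul_const _).mul hl
  · exact lim i hi
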